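/- Let d ≥ 1, let m_i : ℝ² → ℝ (for i = −d, …, d) and α : ℝ² → ℝ be smooth (C^∞), and let M act on smooth u : ℝ² → ℝ by M(u) = Σ_{i=1}^{d} ( m_i·∂_x^i u + m_{−i}·∂_y^i u ) + m_0·u. Then for every smooth u and every point of ℝ², e^{−α}·M(e^{α}u) = Σ_{k=1}^{d} ( m'_k·∂_x^k u + m'_{−k}·∂_y^k u ) + m'_0·u, where m'_k = Σ_{i=k}^{d} C(i,k) m_i B_{i−k}(∂_x α, ∂_x^2 α, …, ∂_x^{i−k}α) for 1 ≤ k ≤ d, m'_{−k} = Σ_{i=k}^{d} C(i,k) m_{−i} B_{i−k}(∂_y α, ∂_y^2 α, …, ∂_y^{i−k}α) for 1 ≤ k ≤ d, and m'_0 = m_0 + Σ_{i=1}^{d} ( m_i B_i(∂_x α, …, ∂_x^{i}α) + m_{−i} B_i(∂_y α, …, ∂_y^{i}α) ). In particular, the gauge transform of an operator in the normalized form (no mixed derivatives) is again in normalized form. -/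

import Mathlib

/-!
The gauge transform only involves derivatives along the two coordinate lines, so everything
reduces to functions of one variable. There, Leibniz' rule gives
`(e^a v)^{(i)} = ∑_k C(i, k) (e^a)^{(i-k)} v^{(k)}`, and the claim amounts to
`(e^a)^{(n)} = e^a B_n(a', a'', …)` (`iteratedDeriv_exp_comp`), followed by an exchange of the
sums over `i` and `k` (`sum_leibniz_reorder`).

Since `(e^a)' = a' e^a`, Leibniz' rule shows that `e^{-a} (e^a)^{(n)}` satisfies the recurrence
`B_{n+1} = ∑_i C(n, i) x_{i+1} B_{n-i}` with `x_i = a^{(i)}`, so it remains to derive this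
recurrence from the explicit formula for the Bell polynomials (`bellComplete_succ`). With
`y_i = x_i / i!`, the number `B_n / n!` is the sum of the monomials
`w(j) = ∏ y_i ^ j_i / j_i!` over all multi-indices with `∑ i j_i = n` (`bellComplete_eq`);
the constraints on the length of `j` in the partial Bell polynomials are automatic. Writing
`n w(j) = ∑ i j_i w(j)` and `j_i w(j) = y_i w(j - e_i)` gives the recurrence.
-/

/-- The partial Bell polynomial `B_{n,k}(x_1, …, x_{n-k+1})`, a sum over all
sequences `(j_1, …, j_{n-k+1})` of nonnegative integers with
`j_1 + ⋯ + j_{n-k+1} = k` and `j_1 + 2 j_2 + ⋯ + (n-k+1) j_{n-k+1} = n`.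
The argument `x m` is `x_m` (indices `1, …, n-k+1` are used). -/
noncomputable def bellPartial (n k : ℕ) (x : ℕ → ℝ) : ℝ :=
  ∑ j ∈ Finset.univ.filter
      (fun j : Fin (n - k + 1) → Fin (n + 1) =>
        (∑ m : Fin (n - k + 1), (j m : ℕ)) = k ∧
        (∑ m : Fin (n - k + 1), ((m : ℕ) + 1) * (j m : ℕ)) = n),
    ((n.factorial : ℝ) / ∏ m : Fin (n - k + 1), ((j m : ℕ).factorial : ℝ)) *
      ∏ m : Fin (n - k + 1), (x ((m : ℕ) + 1) / (((m : ℕ) + 1).factorial : ℝ)) ^ ((j m : ℕ))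

/-- The complete Bell polynomial `B_n(x_1, …, x_n) = ∑_{k=1}^n B_{n,k}`, with `B_0 = 1`. -/
noncomputable def bellComplete (n : ℕ) (x : ℕ → ℝ) : ℝ :=
  if n = 0 then 1 else ∑ k ∈ Finset.Icc 1 n, bellPartial n k x

/-- Partial derivative with respect to the first variable. -/
noncomputable def pdx (f : ℝ × ℝ → ℝ) : ℝ × ℝ → ℝ :=
  fun p => deriv (fun t => f (t, p.2)) p.1

/-- Partial derivative with respect to the second variable. -/
noncomputable def pdy (f : ℝ × ℝ → ℝ) : ℝ × ℝ → ℝ :=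
  fun p => deriv (fun t => f (p.1, t)) p.2

section Helpers

open Finset

/-! ### Combinatorics of Bell polynomials -/

/-- The multi-indices `(j_1, j_2, …, j_N)` with `∑ i j_i = n`; position `i : Fin N` stores
`j_{i+1}`. The bound `n + 1` in the ambient box only makes the set visibly finite. -/
def bellIndex (N n : ℕ) : Finset (Fin N → ℕ) :=
  (Fintype.piFinset fun _ => range (n + 1)).filter fun f => ∑ i : Fin N, ((i : ℕ) + 1) * f i = n

lemma mem_bellIndex {N n : ℕ} {f : Fin N → ℕ} :
    f ∈ bellIndex N n ↔ ∑ i : Fin N, ((i : ℕ) + 1) * f i = n := by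
  simp only [bellIndex, mem_filter, Fintype.mem_piFinset, mem_range, and_iff_right_iff_imp]
  intro h i
  have := single_le_sum (f := fun i : Fin N => ((i : ℕ) + 1) * f i)
    (fun _ _ => Nat.zero_le _) (mem_univ i)
  simp only [h] at this
  nlinarith [Nat.zero_le ((i : ℕ) * f i)]

/-- The monomial `∏ y_i ^ j_i / j_i!`, with `y i` standing for `y_{i+1}`. -/
noncomputable def bellWeight {N : ℕ} (y : ℕ → ℝ) (f : Fin N → ℕ) : ℝ :=
  ∏ i : Fin N, y i ^ f i / ((f i).factorial : ℝ)

/-- The coefficient of `t ^ n` in `exp (∑_{i ≤ N} y_i t ^ i)`. -/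
noncomputable def bellCoeff (N n : ℕ) (y : ℕ → ℝ) : ℝ :=
  ∑ f ∈ bellIndex N n, bellWeight y f

/-- The identity `(g_i + 1) w(g + e_i) = y_i w(g)`. -/
lemma bellWeight_update {N : ℕ} (y : ℕ → ℝ) (g : Fin N → ℕ) (i : Fin N) :
    ((g i + 1 : ℕ) : ℝ) * bellWeight y (Function.update g i (g i + 1)) =
      y i * bellWeight y g := by
  unfold bellWeight
  rw [← mul_prod_erase univ _ (mem_univ i), ← mul_prod_erase univ _ (mem_univ i)]
  have : ∏ x ∈ univ.erase i, y x ^ (Function.update g i (g i + 1)) x /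
        (((Function.update g i (g i + 1)) x).factorial : ℝ) =
      ∏ x ∈ univ.erase i, y x ^ g x / ((g x).factorial : ℝ) :=
    prod_congr rfl fun x hx => by rw [Function.update_of_ne (ne_of_mem_erase hx)]
  rw [this, Function.update_self, Nat.factorial_succ, pow_succ]
  push_cast
  have := Nat.factorial_ne_zero (g i)
  field_simp

lemma sum_weight_update {N : ℕ} (g : Fin N → ℕ) (i : Fin N) (c : ℕ) :
    ∑ j : Fin N, ((j : ℕ) + 1) * Function.update g i c j + ((i : ℕ) + 1) * g i =
      ∑ j : Fin N, ((j : ℕ) + 1) * g j + ((i : ℕ) + 1) * c := by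
  rw [← add_sum_erase univ _ (mem_univ i), ← add_sum_erase univ (fun j : Fin N => _) (mem_univ i)]
  have : ∑ x ∈ univ.erase i, ((x : ℕ) + 1) * Function.update g i c x =
      ∑ x ∈ univ.erase i, ((x : ℕ) + 1) * g x :=
    sum_congr rfl fun x hx => by rw [Function.update_of_ne (ne_of_mem_erase hx)]
  rw [this, Function.update_self]
  ring

/-- The shift `f ↦ f - e_i` is a bijection from the multi-indices of weight `n + 1` with
`f i ≠ 0` onto those of weight `n - i`; since positions start at `0`, it lowers the weight by
`i + 1`. -/
lemma sum_mul_bellWeight {N n : ℕ} (y : ℕ → ℝ) (i : Fin N) (hi : (i : ℕ) ≤ n) :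
    ∑ f ∈ bellIndex N (n + 1), (f i : ℝ) * bellWeight y f =
      y i * bellCoeff N (n - i) y := by
  rw [bellCoeff, mul_sum, ← sum_filter_of_ne (p := fun f => f i ≠ 0)]
  swap
  · intro f _ h h0
    exact h (by simp [h0])
  refine sum_nbij' (fun f => Function.update f i (f i - 1))
    (fun g => Function.update g i (g i + 1)) ?_ ?_ ?_ ?_ ?_
  · intro f hf
    obtain ⟨hf, h0⟩ := mem_filter.1 hf
    rw [mem_bellIndex] at hf ⊢
    have := sum_weight_update f i (f i - 1)
    obtain ⟨c, hc⟩ := Nat.exists_eq_succ_of_ne_zero h0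
    simp only [hc, Nat.succ_eq_add_one, add_tsub_cancel_right, mul_add] at this ⊢
    omega
  · intro g hg
    rw [mem_filter, mem_bellIndex]
    rw [mem_bellIndex] at hg
    refine ⟨?_, by simp⟩
    have := sum_weight_update g i (g i + 1)
    simp only [mul_add] at this ⊢
    omega
  · intro f hf
    have h0 := (mem_filter.1 hf).2
    simp [Nat.sub_add_cancel (Nat.pos_of_ne_zero h0)]
  · intro g hg
    simp
  · intro f hf
    have h0 := (mem_filter.1 hf).2
    have := bellWeight_update y (Function.update f i (f i - 1)) i
    simpa [Nat.sub_add_cancel (Nat.pos_of_ne_zero h0)] using this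

/-- Comparison of coefficients in `t F' = (∑ i y_i t ^ i) F`, where
`F = exp (∑ y_i t ^ i)`. -/
lemma bellCoeff_succ (n : ℕ) (y : ℕ → ℝ) :
    ((n : ℝ) + 1) * bellCoeff (n + 1) (n + 1) y =
      ∑ i : Fin (n + 1), ((i : ℝ) + 1) * (y i * bellCoeff (n + 1) (n - i) y) := by
  simp_rw [fun i : Fin (n + 1) => (sum_mul_bellWeight y i (Nat.lt_succ_iff.1 i.2)).symm, mul_sum]
  rw [sum_comm, bellCoeff, mul_sum]
  refine sum_congr rfl fun f hf => ?_
  have h : ((n : ℝ) + 1) = ∑ i : Fin (n + 1), ((i : ℝ) + 1) * f i := by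
    exact_mod_cast (mem_bellIndex.1 hf).symm
  rw [h, sum_mul]
  exact sum_congr rfl fun i _ => by ring

@[to_additive]
lemma prod_castLE {M : Type*} [CommMonoid M] {K N : ℕ} (h : K ≤ N) (g : Fin N → M)
    (hg : ∀ i : Fin N, K ≤ (i : ℕ) → g i = 1) :
    ∏ i, g i = ∏ i : Fin K, g (Fin.castLE h i) := by
  obtain ⟨r, rfl⟩ := Nat.exists_eq_add_of_le h
  rw [Fin.prod_univ_add, prod_eq_one (s := univ) (f := fun i : Fin r => g (Fin.natAdd K i)),
    mul_one]
  · rfl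
  · intro i _
    exact hg _ (by simp)

/-- A multi-index of weight `n` and total degree `k` vanishes beyond position `n - k + 1`:
an entry `j_i ≥ 1` contributes `i`, and the remaining degree `k - 1` contributes at least
`k - 1`. -/
lemma bellIndex_eq_zero {N n : ℕ} {f : Fin N → ℕ} (hf : f ∈ bellIndex N n) (i : Fin N)
    (hi : n - (∑ j, f j) + 1 ≤ (i : ℕ)) : f i = 0 := by
  rw [mem_bellIndex] at hf
  by_contra h
  have h1 := single_le_sum (f := fun j : Fin N => (j : ℕ) * f j)
    (fun _ _ => Nat.zero_le _) (mem_univ i)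
  have h2 : ∑ j : Fin N, (j : ℕ) * f j + ∑ j, f j = n := by
    rw [← hf, ← sum_add_distrib]
    exact sum_congr rfl fun j _ => by ring
  have h3 : (i : ℕ) ≤ (i : ℕ) * f i := Nat.le_mul_of_pos_right _ (Nat.pos_of_ne_zero h)
  omega

/-- `B_{n,k}` as a sum over multi-indices of a length `N ≥ n` not depending on `k`: the extra
entries are forced to vanish. -/
lemma bellPartial_eq {N n k : ℕ} (hN : n ≤ N) (hk : 1 ≤ k) (hkn : k ≤ n) (x : ℕ → ℝ) :
    bellPartial n k x = n.factorial *
      ∑ f ∈ bellIndex N n with ∑ i, f i = k,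
        bellWeight (fun i => x (i + 1) / ((i + 1).factorial : ℝ)) f := by
  have hK : n - k + 1 ≤ N := by omega
  have key : ∀ f ∈ bellIndex N n, ∑ i, f i = k →
      ∀ i : Fin N, n - k + 1 ≤ (i : ℕ) → f i = 0 := by
    rintro f hf rfl i hi
    exact bellIndex_eq_zero hf i hi
  have hle : ∀ f ∈ bellIndex N n, ∀ i, f i < n + 1 := fun f hf i =>
    mem_range.1 (Fintype.mem_piFinset.1 (mem_filter.1 hf).1 i)
  rw [bellPartial, mul_sum]
  symm
  refine sum_bij'
    (fun f hf i => ⟨f (Fin.castLE hK i), hle f (mem_filter.1 hf).1 _⟩)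
    (fun j _ i => if h : (i : ℕ) < n - k + 1 then (j ⟨i, h⟩ : ℕ) else 0) ?_ ?_ ?_ ?_ ?_
  · intro f hf
    obtain ⟨hf, hs⟩ := mem_filter.1 hf
    refine mem_filter.2 ⟨mem_univ _, ?_, ?_⟩
    · exact (sum_castLE hK f (key f hf hs)).symm.trans hs
    · conv_rhs => rw [← mem_bellIndex.1 hf, sum_castLE hK _
        (fun i hi => by rw [key f hf hs i hi, mul_zero])]
      rfl
  · intro j hj
    obtain ⟨-, h1, h2⟩ := mem_filter.1 hj
    refine mem_filter.2 ⟨mem_bellIndex.2 ?_, ?_⟩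
    · rw [sum_castLE hK _ (fun i hi => by rw [dif_neg (not_lt.2 hi), mul_zero])]
      simpa only [Fin.val_castLE, Fin.is_lt, dite_true, Fin.eta] using h2
    · rw [sum_castLE hK _ (fun i hi => by rw [dif_neg (not_lt.2 hi)])]
      simpa only [Fin.val_castLE, Fin.is_lt, dite_true, Fin.eta] using h1
  · intro f hf
    obtain ⟨hf, hs⟩ := mem_filter.1 hf
    funext i
    by_cases h : (i : ℕ) < n - k + 1
    · simp [h]
    · simp [h, key f hf hs i (not_lt.1 h)]
  · intro j hj
    funext i
    simp only [Fin.val_castLE, Fin.is_lt, dite_true, Fin.eta]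
  · intro f hf
    obtain ⟨hf, hs⟩ := mem_filter.1 hf
    rw [bellWeight, prod_castLE hK _ (fun i hi => by simp [key f hf hs i hi]),
      prod_div_distrib]
    simp only [Fin.val_castLE]
    ring

lemma bellComplete_eq {N n : ℕ} (hN : n ≤ N) (x : ℕ → ℝ) :
    bellComplete n x = n.factorial *
      bellCoeff N n (fun i => x (i + 1) / ((i + 1).factorial : ℝ)) := by
  rcases Nat.eq_zero_or_pos n with rfl | hn
  · have : bellIndex N 0 = {0} := by
      ext f
      simp [mem_bellIndex, funext_iff]
    simp [bellComplete, bellCoeff, this, bellWeight]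
  · rw [bellComplete, if_neg hn.ne', sum_congr rfl fun k hk =>
      bellPartial_eq hN (mem_Icc.1 hk).1 (mem_Icc.1 hk).2 x, ← mul_sum, bellCoeff,
      sum_fiberwise_of_maps_to]
    intro f hf
    rw [mem_bellIndex] at hf
    have h2 : ∑ j : Fin N, (j : ℕ) * f j + ∑ j, f j = n := by
      rw [← hf, ← sum_add_distrib]
      exact sum_congr rfl fun j _ => by ring
    refine mem_Icc.2 ⟨Nat.one_le_iff_ne_zero.2 fun h0 => ?_, by omega⟩
    have : ∀ j, f j = 0 := by simpa using h0
    simp [this] at hf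
    omega

lemma bellComplete_zero (x : ℕ → ℝ) : bellComplete 0 x = 1 := by simp [bellComplete]

/-- The recurrence `B_{n+1} = ∑ C(n, i) x_{i+1} B_{n-i}`. -/
lemma bellComplete_succ (n : ℕ) (x : ℕ → ℝ) :
    bellComplete (n + 1) x =
      ∑ i ∈ range (n + 1), (n.choose i : ℝ) * x (i + 1) * bellComplete (n - i) x := by
  rw [bellComplete_eq le_rfl, Nat.factorial_succ]
  push_cast
  rw [mul_comm ((n : ℝ) + 1), mul_assoc, bellCoeff_succ, mul_sum,
    ← Fin.sum_univ_eq_sum_range (fun i => (n.choose i : ℝ) * x (i + 1) * bellComplete (n - i) x)]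
  refine sum_congr rfl fun i _ => ?_
  have hi : (i : ℕ) ≤ n := Nat.lt_succ_iff.1 i.2
  rw [bellComplete_eq (N := n + 1) (by omega), Nat.cast_choose ℝ hi, Nat.factorial_succ]
  have h1 := Nat.factorial_ne_zero (i : ℕ)
  have h2 := Nat.factorial_ne_zero (n - i)
  push_cast
  field_simp

/-! ### Derivatives along a line -/

lemma iteratedDeriv_exp_comp {a : ℝ → ℝ} (ha : ContDiff ℝ (⊤ : ℕ∞) a) (n : ℕ) (t : ℝ) :
    iteratedDeriv n (fun s => Real.exp (a s)) t =
      Real.exp (a t) * bellComplete n (fun s => iteratedDeriv s a t) := by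
  induction n using Nat.strong_induction_on with
  | _ n ih =>
    cases n with
    | zero => simp [bellComplete_zero]
    | succ n =>
      have hd : deriv (fun s => Real.exp (a s)) = fun s => deriv a s * Real.exp (a s) := by
        funext s
        have := (ha.differentiable (by simp) s).hasDerivAt.exp.deriv
        rw [this, mul_comm]
      have h1 : ContDiffAt ℝ n (deriv a) t :=
        ((contDiff_infty_iff_deriv.1 ha).2.of_le (by exact_mod_cast le_top)).contDiffAt
      have h2 : ContDiffAt ℝ n (fun s => Real.exp (a s)) t :=
        (ha.exp.of_le (by exact_mod_cast le_top)).contDiffAt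
      rw [iteratedDeriv_succ', hd, iteratedDeriv_fun_mul h1 h2, bellComplete_succ, mul_sum]
      refine sum_congr rfl fun i hi => ?_
      rw [ih (n - i) (by omega), ← iteratedDeriv_succ']
      ring

/-- Leibniz' rule for `e ^ a * v`, after factoring out `e ^ a`. -/
lemma exp_neg_mul_iteratedDeriv {a v : ℝ → ℝ} (ha : ContDiff ℝ (⊤ : ℕ∞) a)
    (hv : ContDiff ℝ (⊤ : ℕ∞) v) (n : ℕ) (t : ℝ) :
    Real.exp (-(a t)) * iteratedDeriv n (fun s => Real.exp (a s) * v s) t =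
      ∑ k ∈ range (n + 1), (n.choose k : ℝ) *
        bellComplete (n - k) (fun s => iteratedDeriv s a t) * iteratedDeriv k v t := by
  have h1 : ContDiffAt ℝ n v t := (hv.of_le (by exact_mod_cast le_top)).contDiffAt
  have h2 : ContDiffAt ℝ n (fun s => Real.exp (a s)) t :=
    (ha.exp.of_le (by exact_mod_cast le_top)).contDiffAt
  simp_rw [mul_comm (Real.exp (a _)) (v _)]
  rw [iteratedDeriv_fun_mul h1 h2, mul_sum]
  refine sum_congr rfl fun k _ => ?_
  rw [iteratedDeriv_exp_comp ha]
  have : Real.exp (-(a t)) * Real.exp (a t) = 1 := by rw [← Real.exp_add]; simp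
  linear_combination ((n.choose k : ℝ) * iteratedDeriv k v t *
    bellComplete (n - k) (fun s => iteratedDeriv s a t)) * this

lemma pdx_iterate (n : ℕ) (f : ℝ × ℝ → ℝ) (p : ℝ × ℝ) :
    pdx^[n] f p = iteratedDeriv n (fun t => f (t, p.2)) p.1 := by
  induction n generalizing p with
  | zero => simp
  | succ n ih =>
    rw [Function.iterate_succ_apply', iteratedDeriv_succ, pdx]
    simp_rw [ih]

lemma pdy_iterate (n : ℕ) (f : ℝ × ℝ → ℝ) (p : ℝ × ℝ) :
    pdy^[n] f p = iteratedDeriv n (fun t => f (p.1, t)) p.2 := by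
  induction n generalizing p with
  | zero => simp
  | succ n ih =>
    rw [Function.iterate_succ_apply', iteratedDeriv_succ, pdy]
    simp_rw [ih]

/-! ### Collecting the coefficients -/

/-- Reordering of `∑_i c_i ∑_{k ≤ i} C(i, k) B_{i-k} w_k` by the order `k`, with the terms of
order zero set apart. -/
lemma sum_leibniz_reorder (d : ℕ) (c b w : ℕ → ℝ) :
    ∑ i ∈ Icc 1 d, c i * ∑ k ∈ range (i + 1), (i.choose k : ℝ) * b (i - k) * w k =
      ∑ k ∈ Icc 1 d, (∑ i ∈ Icc k d, (i.choose k : ℝ) * c i * b (i - k)) * w k +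
        (∑ i ∈ Icc 1 d, c i * b i) * w 0 := by
  have split : ∀ i, ∑ k ∈ range (i + 1), (i.choose k : ℝ) * b (i - k) * w k =
      ∑ k ∈ Icc 1 i, (i.choose k : ℝ) * b (i - k) * w k + b i * w 0 := by
    intro i
    rw [sum_range_succ', range_eq_Ico, sum_Ico_add' (fun k => (i.choose k : ℝ) * b (i - k) * w k)]
    simp
    rfl
  simp_rw [split, mul_add, sum_add_distrib, mul_sum, sum_mul]
  congr 1
  · rw [sum_comm' (t' := Icc 1 d) (s' := fun k => Icc k d)]
    · exact sum_congr rfl fun k _ => sum_congr rfl fun i _ => by ring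
    · intro i k
      simp only [mem_Icc]
      omega
  · exact sum_congr rfl fun i _ => by ring

end Helpers

/-- The gauge transform of a normalized operator
`M = ∑_{i=1}^d (m_i D_x^i + m_{-i} D_y^i) + m_0` is again in normalized form,
with coefficients `m'_k`, `m'_{-k}`, `m'_0` expressed via complete Bell polynomials. -/
theorem gauge_transform_normalized_operator
    (d : ℕ) (hd : 1 ≤ d)
    (m : ℤ → ℝ × ℝ → ℝ) (α : ℝ × ℝ → ℝ)
    (hm : ∀ i : ℤ, ContDiff ℝ (⊤ : ℕ∞) (m i)) (hα : ContDiff ℝ (⊤ : ℕ∞) α)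
    (u : ℝ × ℝ → ℝ) (hu : ContDiff ℝ (⊤ : ℕ∞) u) (p : ℝ × ℝ) :
    Real.exp (-(α p)) *
      ((∑ i ∈ Finset.Icc 1 d,
          (m (i : ℤ) p * pdx^[i] (fun q => Real.exp (α q) * u q) p
            + m (-(i : ℤ)) p * pdy^[i] (fun q => Real.exp (α q) * u q) p))
        + m 0 p * (Real.exp (α p) * u p))
    = (∑ k ∈ Finset.Icc 1 d,
        ((∑ i ∈ Finset.Icc k d,
            (i.choose k : ℝ) * m (i : ℤ) p
              * bellComplete (i - k) (fun s => pdx^[s] α p)) * pdx^[k] u p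
          + (∑ i ∈ Finset.Icc k d,
              (i.choose k : ℝ) * m (-(i : ℤ)) p
                * bellComplete (i - k) (fun s => pdy^[s] α p)) * pdy^[k] u p))
      + (m 0 p + ∑ i ∈ Finset.Icc 1 d,
          (m (i : ℤ) p * bellComplete i (fun s => pdx^[s] α p)
            + m (-(i : ℤ)) p * bellComplete i (fun s => pdy^[s] α p))) * u p := by
  have hx : ∀ f : ℝ × ℝ → ℝ, ContDiff ℝ (⊤ : ℕ∞) f →
      ContDiff ℝ (⊤ : ℕ∞) (fun t => f (t, p.2)) := fun f hf =>
    hf.comp (contDiff_id.prodMk contDiff_const)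
  have hy : ∀ f : ℝ × ℝ → ℝ, ContDiff ℝ (⊤ : ℕ∞) f →
      ContDiff ℝ (⊤ : ℕ∞) (fun t => f (p.1, t)) := fun f hf =>
    hf.comp (contDiff_const.prodMk contDiff_id)
  have Lx : ∀ i : ℕ, Real.exp (-(α p)) * pdx^[i] (fun q => Real.exp (α q) * u q) p =
      ∑ k ∈ Finset.range (i + 1), (i.choose k : ℝ) *
        bellComplete (i - k) (fun s => pdx^[s] α p) * pdx^[k] u p := by
    intro i
    simp_rw [pdx_iterate]
    exact exp_neg_mul_iteratedDeriv (hx α hα) (hx u hu) i p.1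
  have Ly : ∀ i : ℕ, Real.exp (-(α p)) * pdy^[i] (fun q => Real.exp (α q) * u q) p =
      ∑ k ∈ Finset.range (i + 1), (i.choose k : ℝ) *
        bellComplete (i - k) (fun s => pdy^[s] α p) * pdy^[k] u p := by
    intro i
    simp_rw [pdy_iterate]
    exact exp_neg_mul_iteratedDeriv (hy α hα) (hy u hu) i p.2
  have he : Real.exp (-(α p)) * Real.exp (α p) = 1 := by rw [← Real.exp_add]; simp
  have Rx := sum_leibniz_reorder d (fun i => m (i : ℤ) p)
    (fun n => bellComplete n (fun s => pdx^[s] α p)) (fun k => pdx^[k] u p)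
  have Ry := sum_leibniz_reorder d (fun i => m (-(i : ℤ)) p)
    (fun n => bellComplete n (fun s => pdy^[s] α p)) (fun k => pdy^[k] u p)
  simp_rw [← Lx] at Rx
  simp_rw [← Ly] at Ry
  simp only [Function.iterate_zero, id_eq] at Rx Ry
  simp_rw [mul_left_comm _ (Real.exp (-(α p))), ← Finset.mul_sum] at Rx Ry
  simp_rw [Finset.sum_add_distrib]
  linear_combination Rx + Ry + m 0 p * u p * he
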